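/- If G is a 1-walk regular graph on n vertices, then ϑ(G)·ϑ(Ḡ) = n, where ϑ is the Lovász theta number. -/

import Mathlib

open Matrix
open scoped ComplexOrder

/-- The Lovász theta number of a graph. -/
noncomputable def lovaszTheta {n : ℕ} (G : SimpleGraph (Fin n)) : ℝ :=
  sSup {r : ℝ | ∃ X : Matrix (Fin n) (Fin n) ℂ,
    X.PosSemidef ∧ (∀ i j, G.Adj i j → X i j = 0) ∧ Matrix.trace X = 1 ∧
    Matrix.trace ((Matrix.of fun _ _ => (1 : ℂ)) * X) = (r : ℂ)}

/-!
Let `A` be the adjacency matrix, `d` the valency, `τ` the least eigenvalue of `A`, `J` the all-ones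
matrix and `E` the orthogonal projection onto the `τ`-eigenspace. If `N - J ⪰ 0`, where `N` has
constant diagonal `t` and is otherwise supported on the edges of `G`, then `ϑ(G) ≤ t` by weak
duality, while `N / (n t)` is feasible for `Gᶜ` and shows `n / t ≤ ϑ(Gᶜ)`. So it suffices to find
such matrices for `G` and for `Gᶜ` whose diagonal values multiply to `n`. For `G` a multiple of
`A - τ` works, with value `n / (1 - d / τ)` (Hoffman's bound). For `Gᶜ` one adds `J` to a multiple
of `E`: as a polynomial in `A`, the matrix `E` is constant on the diagonal and on the edges, and
`A E = τ E` forces the value `1 - d / τ`.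
-/

open Polynomial

section PosSemidef

variable {V 𝕜 : Type*} [RCLike 𝕜]

theorem pos_of_posSemidef_of_diag_eq [Finite V] {M : Matrix V V 𝕜} {c : 𝕜} (hM : M.PosSemidef)
    (hM0 : M ≠ 0) (hc : ∀ v, M v v = c) : 0 < c := by
  have := Fintype.ofFinite V
  have : Nonempty V := by
    by_contra! hV
    exact hM0 (Subsingleton.elim _ _)
  refine lt_of_le_of_ne (hc (Classical.arbitrary V) ▸ hM.diag_nonneg) ?_
  rintro rfl
  exact hM0 (hM.trace_eq_zero_iff.1 (Finset.sum_eq_zero fun v _ => hc v))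

variable [Fintype V]

theorem trace_mul_nonneg_of_posSemidef {M X : Matrix V V 𝕜} (hM : M.PosSemidef)
    (hX : X.PosSemidef) : 0 ≤ (M * X).trace := by
  obtain ⟨m, v, rfl⟩ := posSemidef_iff_eq_sum_vecMulVec.mp hX
  rw [Finset.mul_sum, trace_sum]
  refine Finset.sum_nonneg fun i _ => ?_
  rw [mul_vecMulVec, trace_vecMulVec, dotProduct_comm]
  exact hM.dotProduct_mulVec_nonneg _

theorem posSemidef_sub_smul_of_isStarProjection {B Q : Matrix V V 𝕜} {μ : ℝ} (hB : B.PosSemidef)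
    (hQ : IsStarProjection Q) (hBQ : B * Q = μ • Q) : (B - μ • Q).PosSemidef := by
  classical
  have hQstar : Qᴴ = Q := hQ.isSelfAdjoint
  have hQB : Q * B = μ • Q := by
    simpa [hQstar, hB.isHermitian.eq] using congr(($hBQ)ᴴ)
  have hcompress : (1 - Q)ᴴ * B * (1 - Q) = B - μ • Q := by
    rw [conjTranspose_sub, conjTranspose_one, hQstar, sub_mul, one_mul, hQB, sub_mul, mul_sub,
      mul_one, hBQ, smul_mul_assoc, hQ.mul_one_sub_self, smul_zero, sub_zero]
  exact hcompress ▸ hB.conjTranspose_mul_mul_same (1 - Q)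

variable [DecidableEq V]

open scoped MatrixOrder in
theorem exists_mem_spectrum_posSemidef_sub [Nonempty V] {A : Matrix V V 𝕜} (hA : A.IsHermitian) :
    ∃ τ ∈ spectrum ℝ A, (A - τ • (1 : Matrix V V 𝕜)).PosSemidef := by
  obtain ⟨τ, hτ, hmin⟩ := Set.exists_min_image (spectrum ℝ A) id finite_real_spectrum
    (hA.spectrum_real_eq_range_eigenvalues ▸ Set.range_nonempty _)
  refine ⟨τ, hτ, ?_⟩
  rw [← Algebra.algebraMap_eq_smul_one, ← le_iff]
  exact (algebraMap_le_iff_le_spectrum (ha := hA)).2 hmin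

open scoped MatrixOrder in
theorem exists_aeval_posSemidef_mul_eq_smul {A : Matrix V V 𝕜} (hA : A.IsHermitian) {μ : ℝ}
    (hμ : μ ∈ spectrum ℝ A) :
    ∃ p : ℝ[X], (aeval A p).PosSemidef ∧ aeval A p ≠ 0 ∧ A * aeval A p = μ • aeval A p := by
  have hfin : (spectrum ℝ A).Finite := finite_real_spectrum
  set p := Lagrange.basis hfin.toFinset id μ
  have hpμ : p.eval μ = 1 := Lagrange.eval_basis_self (Set.injOn_id _) (hfin.mem_toFinset.2 hμ)
  have hp : ∀ x ∈ spectrum ℝ A, x ≠ μ → p.eval x = 0 := fun x hx hne =>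
    Lagrange.eval_basis_of_ne (v := id) hne.symm (hfin.mem_toFinset.2 hx)
  refine ⟨p, ?_, ?_, ?_⟩
  · rw [← nonneg_iff_posSemidef, ← cfc_polynomial p A hA]
    refine cfc_nonneg fun x hx => ?_
    obtain rfl | hne := eq_or_ne x μ
    · simp [hpμ]
    · simp [hp x hx hne]
  · intro h0
    have hmem := spectrum.subset_polynomial_aeval A p ⟨μ, hμ, rfl⟩
    have : Nontrivial (Matrix V V 𝕜) := by
      by_contra! hsub
      simp [spectrum.of_subsingleton] at hμ
    simp [h0, hpμ] at hmem
  · have hX : A * aeval A p = aeval A (X * p) := by simp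
    have hC : μ • aeval A p = aeval A (C μ * p) := by simp [Algebra.smul_def]
    rw [hX, hC, ← cfc_polynomial (X * p) A hA, ← cfc_polynomial (C μ * p) A hA]
    refine cfc_congr fun x hx => ?_
    obtain rfl | hne := eq_or_ne x μ
    · simp
    · simp [hp x hx hne]

end PosSemidef

section AllOnes

/-- The all-ones matrix, written `J` in the literature. -/
def allOnes (V R : Type*) [One R] : Matrix V V R := of fun _ _ => 1

@[simp]
theorem allOnes_apply {V R : Type*} [One R] (v w : V) : allOnes V R v w = 1 := rfl

variable {V 𝕜 : Type*} [RCLike 𝕜]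

theorem posSemidef_allOnes [Finite V] : (allOnes V 𝕜).PosSemidef := by
  have := Fintype.ofFinite V
  have hJ : allOnes V 𝕜 = vecMulVec 1 (star 1) := by
    ext
    simp [vecMulVec_apply]
  exact hJ ▸ posSemidef_vecMulVec_self_star 1

variable [Fintype V]

theorem isStarProjection_inv_card_smul_allOnes :
    IsStarProjection ((Fintype.card V : ℝ)⁻¹ • allOnes V 𝕜) where
  isIdempotentElem := by
    ext i j
    have : Nonempty V := ⟨i⟩
    simp [Matrix.mul_apply, RCLike.real_smul_eq_coe_mul]
  isSelfAdjoint := (IsSelfAdjoint.all _).smul posSemidef_allOnes.isHermitian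

theorem posSemidef_smul_sub_allOnes {B : Matrix V V 𝕜} {μ : ℝ} (hB : B.PosSemidef) (hμ : 0 < μ)
    (hBJ : B * allOnes V 𝕜 = μ • allOnes V 𝕜) :
    (((Fintype.card V : ℝ) / μ) • B - allOnes V 𝕜).PosSemidef := by
  obtain hV | hV := isEmpty_or_nonempty V
  · convert PosSemidef.zero
    exact Subsingleton.elim _ _
  set n := (Fintype.card V : ℝ)
  have hn : 0 < n := Nat.cast_pos.2 Fintype.card_pos
  have hBQ : B * (n⁻¹ • allOnes V 𝕜) = μ • n⁻¹ • allOnes V 𝕜 := by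
    rw [mul_smul_comm, hBJ, smul_comm]
  have hdeflate := posSemidef_sub_smul_of_isStarProjection hB
    isStarProjection_inv_card_smul_allOnes hBQ
  have hscale : (n / μ) • (B - μ • n⁻¹ • allOnes V 𝕜) = (n / μ) • B - allOnes V 𝕜 := by
    rw [smul_sub, smul_smul, smul_smul, div_mul_cancel₀ _ hμ.ne', mul_inv_cancel₀ hn.ne', one_smul]
  exact hscale ▸ hdeflate.smul (div_pos hn hμ).le

end AllOnes

section ThetaDual

variable {V : Type*} {G : SimpleGraph V} {t : ℝ} {N X : Matrix V V ℂ}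

/-- `N` is a feasible point of value `t` of the semidefinite program dual to the one defining
`ϑ(G)`: it dominates the all-ones matrix, has constant diagonal `t`, and is otherwise supported on
the edges of `G`. -/
structure IsThetaDual (G : SimpleGraph V) (t : ℝ) (N : Matrix V V ℂ) : Prop where
  posSemidef_sub_allOnes : (N - allOnes V ℂ).PosSemidef
  apply_self : ∀ v, N v v = t
  apply_of_compl_adj : ∀ v w, Gᶜ.Adj v w → N v w = 0

namespace IsThetaDual

theorem posSemidef [Finite V] (hN : IsThetaDual G t N) : N.PosSemidef := by
  simpa using hN.posSemidef_sub_allOnes.add posSemidef_allOnes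

theorem one_le [Nonempty V] (hN : IsThetaDual G t N) : 1 ≤ t := by
  have hdiag := hN.posSemidef_sub_allOnes.diag_nonneg (i := Classical.arbitrary V)
  rw [Matrix.sub_apply, hN.apply_self, allOnes_apply, sub_nonneg] at hdiag
  exact_mod_cast hdiag

variable [Fintype V]

theorem trace_mul (hN : IsThetaDual G t N) (hX : ∀ v w, G.Adj v w → X v w = 0) :
    (N * X).trace = t * X.trace := by
  simp only [trace, diag_apply, Matrix.mul_apply, Finset.mul_sum]
  refine Finset.sum_congr rfl fun v _ => ?_
  rw [Finset.sum_eq_single_of_mem v (Finset.mem_univ v), hN.apply_self]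
  intro w _ hwv
  by_cases hadj : G.Adj w v
  · rw [hX w v hadj, mul_zero]
  · rw [hN.apply_of_compl_adj v w ⟨hwv.symm, fun h => hadj h.symm⟩, zero_mul]

theorem le_of_feasible (hN : IsThetaDual G t N) (hX : X.PosSemidef)
    (hadj : ∀ v w, G.Adj v w → X v w = 0) (htr : X.trace = 1) {r : ℝ}
    (hr : (allOnes V ℂ * X).trace = r) : r ≤ t := by
  have hgap := trace_mul_nonneg_of_posSemidef hN.posSemidef_sub_allOnes hX
  rw [sub_mul, trace_sub, hN.trace_mul hadj, htr, hr, mul_one, sub_nonneg] at hgap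
  exact_mod_cast hgap

end IsThetaDual

theorem isThetaDual_card [Fintype V] [DecidableEq V] (G : SimpleGraph V) :
    IsThetaDual G (Fintype.card V) ((Fintype.card V : ℝ) • 1) where
  posSemidef_sub_allOnes := by
    simpa using posSemidef_smul_sub_allOnes PosSemidef.one one_pos
      (by simp : 1 * allOnes V ℂ = (1 : ℝ) • allOnes V ℂ)
  apply_self v := by simp
  apply_of_compl_adj v w hvw := by simp [hvw.ne]

theorem isThetaDual_top_allOnes : IsThetaDual (⊤ : SimpleGraph V) 1 (allOnes V ℂ) where
  posSemidef_sub_allOnes := by simpa using PosSemidef.zero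
  apply_self _ := by simp
  apply_of_compl_adj v w hvw := by simp at hvw

end ThetaDual

section LovaszTheta

variable {n : ℕ} {G : SimpleGraph (Fin n)} {s t : ℝ} {M N X : Matrix (Fin n) (Fin n) ℂ}

theorem lovaszTheta_of_isEmpty (G : SimpleGraph (Fin 0)) : lovaszTheta G = 0 := by
  simp [lovaszTheta, trace]

theorem le_lovaszTheta (hX : X.PosSemidef) (hadj : ∀ i j, G.Adj i j → X i j = 0)
    (htr : X.trace = 1) {r : ℝ} (hr : r ≤ (allOnes (Fin n) ℂ * X).trace) : r ≤ lovaszTheta G := by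
  obtain ⟨x, -, hx⟩ := RCLike.nonneg_iff_exists_ofReal.1
    (trace_mul_nonneg_of_posSemidef posSemidef_allOnes hX)
  rw [← hx] at hr
  refine (Complex.real_le_real.1 hr).trans
    (le_csSup ⟨Fintype.card (Fin n), ?_⟩ ⟨X, hX, hadj, htr, hx.symm⟩)
  rintro _ ⟨Y, hY, hYadj, hYtr, hYr⟩
  exact (isThetaDual_card G).le_of_feasible hY hYadj hYtr hYr

variable [NeZero n]

namespace IsThetaDual

theorem lovaszTheta_le (hN : IsThetaDual G t N) : lovaszTheta G ≤ t := by
  refine Real.sSup_le ?_ (zero_le_one.trans hN.one_le)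
  rintro _ ⟨X, hX, hadj, htr, hr⟩
  exact hN.le_of_feasible hX hadj htr hr

theorem div_le_lovaszTheta (hN : IsThetaDual Gᶜ t N) : n / t ≤ lovaszTheta G := by
  have ht : 0 < t := zero_lt_one.trans_le hN.one_le
  have hn : (0 : ℝ) < n := Nat.cast_pos.2 (NeZero.pos n)
  have htr : N.trace = (n * t : ℝ) := by simp [trace, hN.apply_self]
  have hJN : ((n ^ 2 : ℝ) : ℂ) ≤ (allOnes (Fin n) ℂ * N).trace := by
    have hJJ : (allOnes (Fin n) ℂ * allOnes (Fin n) ℂ).trace = (n ^ 2 : ℝ) := by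
      simp [trace, Matrix.mul_apply, pow_two]
    rw [← sub_nonneg, ← hJJ, ← trace_sub, ← mul_sub]
    exact trace_mul_nonneg_of_posSemidef posSemidef_allOnes hN.posSemidef_sub_allOnes
  refine le_lovaszTheta (X := (n * t : ℝ)⁻¹ • N) (hN.posSemidef.smul (by positivity)) ?_ ?_ ?_
  · intro i j hij
    rw [Matrix.smul_apply, hN.apply_of_compl_adj i j (by rwa [compl_compl]), smul_zero]
  · rw [trace_smul, htr, Complex.real_smul, ← Complex.ofReal_mul, inv_mul_cancel₀ (by positivity),
      Complex.ofReal_one]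
  · have hratio : (n / t : ℝ) = (n * t : ℝ)⁻¹ * n ^ 2 := by field_simp
    rw [mul_smul_comm, trace_smul, hratio, Complex.ofReal_mul, ← Complex.real_smul]
    exact smul_le_smul_of_nonneg_left hJN (by positivity)

end IsThetaDual

theorem lovaszTheta_mul_compl_of_isThetaDual (hM : IsThetaDual G s M) (hN : IsThetaDual Gᶜ t N)
    (hst : s * t = n) : lovaszTheta G * lovaszTheta Gᶜ = n := by
  have hs : s ≠ 0 := (zero_lt_one.trans_le hM.one_le).ne'
  have ht : t ≠ 0 := (zero_lt_one.trans_le hN.one_le).ne'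
  have hG : lovaszTheta G = s :=
    hM.lovaszTheta_le.antisymm (by simpa [← hst, ht] using hN.div_le_lovaszTheta)
  rw [← compl_compl G] at hM
  have hGc : lovaszTheta Gᶜ = t :=
    hN.lovaszTheta_le.antisymm (by simpa [← hst, hs] using hM.div_le_lovaszTheta)
  rw [hG, hGc, hst]

end LovaszTheta

section AdjMatrix

variable {V : Type*} {G : SimpleGraph V} [DecidableRel G.Adj]

theorem isHermitian_adjMatrix {R : Type*} [NonAssocSemiring R] [StarRing R] :
    (G.adjMatrix R).IsHermitian := by
  ext v w
  simp only [conjTranspose_apply, SimpleGraph.adjMatrix_apply, G.adj_comm w v]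
  split_ifs <;> simp

theorem neg_of_posSemidef_adjMatrix_sub [Finite V] [DecidableEq V] {τ : ℝ} (hG : G ≠ ⊥)
    (hτ : (G.adjMatrix ℂ - τ • (1 : Matrix V V ℂ)).PosSemidef) : τ < 0 := by
  have := Fintype.ofFinite V
  by_contra! hτ0
  have hA : (G.adjMatrix ℂ).PosSemidef := by
    simpa using hτ.add (PosSemidef.one.smul hτ0)
  have hA0 : G.adjMatrix ℂ = 0 := hA.trace_eq_zero_iff.1 (G.trace_adjMatrix ℂ)
  refine hG (SimpleGraph.ext ?_)
  ext v w
  simpa [SimpleGraph.adjMatrix_apply] using congr($hA0 v w)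

variable [Fintype V] {d : ℕ}

theorem isThetaDual_adjMatrix_sub [DecidableEq V] {τ : ℝ} (hreg : G.IsRegularOfDegree d)
    (hτ : τ < 0)
    (hpsd : (G.adjMatrix ℂ - τ • (1 : Matrix V V ℂ)).PosSemidef) :
    IsThetaDual G (Fintype.card V / (1 - d / τ))
      ((Fintype.card V / (d - τ) : ℝ) • (G.adjMatrix ℂ - τ • (1 : Matrix V V ℂ))) where
  posSemidef_sub_allOnes := by
    refine posSemidef_smul_sub_allOnes hpsd (sub_pos.2 (hτ.trans_le d.cast_nonneg)) ?_
    ext v w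
    simp [sub_mul, hreg.degree_eq v]
  apply_self v := by
    have hvalue : Fintype.card V / (1 - d / τ) = Fintype.card V / (d - τ) * -τ := by
      rw [one_sub_div hτ.ne, div_div_eq_mul_div, ← neg_sub τ, div_neg, neg_mul_neg,
        div_mul_eq_mul_div]
    simp [hvalue]
  apply_of_compl_adj v w hvw := by
    simp [SimpleGraph.adjMatrix_apply, hvw.ne, ((G.compl_adj v w).1 hvw).2]

theorem natCast_mul_eq_smul_of_adjMatrix_mul_eq_smul [Nonempty V] {R S : Type*} [NonAssocSemiring R]
    [SMul S R] {τ : S} {E : Matrix V V R} {a b : R} (hreg : G.IsRegularOfDegree d)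
    (hAE : G.adjMatrix R * E = τ • E) (ha : ∀ v, E v v = a) (hb : ∀ v w, G.Adj v w → E v w = b) :
    d * b = τ • a := by
  obtain ⟨v⟩ := ‹Nonempty V›
  calc (d : R) * b = ∑ w ∈ G.neighborFinset v, E w v := by
        rw [Finset.sum_congr rfl fun w hw => hb w v ((G.mem_neighborFinset v w).1 hw).symm,
          Finset.sum_const, G.card_neighborFinset_eq_degree, hreg.degree_eq v, nsmul_eq_mul]
    _ = τ • a := by
        rw [← SimpleGraph.adjMatrix_mul_apply, hAE, Matrix.smul_apply, ha]

end AdjMatrix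

section WalkRegular

variable {V R : Type*} {G : SimpleGraph V}

/-- The matrix `M` has constant diagonal, and constant entries on the edges of `G`. -/
def IsEdgeConstant (G : SimpleGraph V) (M : Matrix V V R) : Prop :=
  ∃ a b, (∀ v, M v v = a) ∧ ∀ v w, G.Adj v w → M v w = b

namespace IsEdgeConstant

variable {M N : Matrix V V R}

theorem one [DecidableEq V] [Zero R] [One R] : IsEdgeConstant G (1 : Matrix V V R) :=
  ⟨1, 0, fun _ => one_apply_eq _, fun _ _ hvw => one_apply_ne hvw.ne⟩

theorem add [Add R] : IsEdgeConstant G M → IsEdgeConstant G N → IsEdgeConstant G (M + N)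
  | ⟨a, b, ha, hb⟩, ⟨a', b', ha', hb'⟩ =>
    ⟨a + a', b + b', fun v => by rw [Matrix.add_apply, ha, ha'],
      fun v w hvw => by rw [Matrix.add_apply, hb v w hvw, hb' v w hvw]⟩

theorem smul {S : Type*} [SMul S R] (c : S) : IsEdgeConstant G M → IsEdgeConstant G (c • M)
  | ⟨a, b, ha, hb⟩ =>
    ⟨c • a, c • b, fun v => by rw [Matrix.smul_apply, ha],
      fun v w hvw => by rw [Matrix.smul_apply, hb v w hvw]⟩

end IsEdgeConstant

variable [Fintype V] [DecidableRel G.Adj]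

theorem exists_isThetaDual_compl {d : ℕ} {τ : ℝ} {E : Matrix V V ℂ}
    (hreg : G.IsRegularOfDegree d) (hτ : τ < 0) (hE : E.PosSemidef) (hE0 : E ≠ 0)
    (hAE : G.adjMatrix ℂ * E = τ • E) (hconst : IsEdgeConstant G E) :
    ∃ N, IsThetaDual Gᶜ (1 - d / τ) N := by
  have : Nonempty V := by
    by_contra! hV
    exact hE0 (Subsingleton.elim _ _)
  obtain ⟨a, b, ha, hb⟩ := hconst
  obtain ⟨c, hc, rfl⟩ : ∃ c : ℝ, 0 < c ∧ (c : ℂ) = a :=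
    RCLike.pos_iff_exists_ofReal.1 (pos_of_posSemidef_of_diag_eq hE hE0 ha)
  have hrel : (d : ℂ) * b = τ • (c : ℂ) :=
    natCast_mul_eq_smul_of_adjMatrix_mul_eq_smul hreg hAE ha hb
  have hscale : 0 ≤ d / (-τ * c) :=
    div_nonneg d.cast_nonneg (mul_pos (neg_pos.2 hτ) hc).le
  have hτ0 : (τ : ℂ) ≠ 0 := Complex.ofReal_ne_zero.2 hτ.ne
  have hc0 : (c : ℂ) ≠ 0 := Complex.ofReal_ne_zero.2 hc.ne'
  refine ⟨(d / (-τ * c)) • E + allOnes V ℂ, ?_, fun v => ?_, fun v w hvw => ?_⟩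
  · simpa using hE.smul hscale
  · rw [Matrix.add_apply, Matrix.smul_apply, ha, Complex.real_smul, allOnes_apply]
    have hvalue : d / (-τ * c) * c + 1 = 1 - d / τ := by
      field_simp
      ring
    exact_mod_cast hvalue
  · rw [compl_compl] at hvw
    rw [Matrix.add_apply, Matrix.smul_apply, hb v w hvw, Complex.real_smul, allOnes_apply]
    push_cast
    rw [div_mul_eq_mul_div, hrel, Complex.real_smul, neg_mul, div_neg,
      div_self (mul_ne_zero hτ0 hc0), neg_add_cancel]

variable [DecidableEq V] [CommSemiring R]

/-- `1`-walk regularity, with the constants `a_k`, `b_k` taken in `R`. -/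
def IsOneWalkRegular (R : Type*) [CommSemiring R] (G : SimpleGraph V) [DecidableRel G.Adj] : Prop :=
  ∀ k : ℕ, 0 < k → ∃ a b : R,
    hadamard (G.adjMatrix R ^ k) 1 = a • (1 : Matrix V V R) ∧
    hadamard (G.adjMatrix R ^ k) (G.adjMatrix R) = b • G.adjMatrix R

namespace IsOneWalkRegular

theorem isEdgeConstant_pow (hG : IsOneWalkRegular R G) (k : ℕ) :
    IsEdgeConstant G (G.adjMatrix R ^ k) := by
  obtain rfl | hk := k.eq_zero_or_pos
  · exact pow_zero (G.adjMatrix R) ▸ IsEdgeConstant.one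
  obtain ⟨a, b, hdiag, hedge⟩ := hG k hk
  refine ⟨a, b, fun v => ?_, fun v w hvw => ?_⟩
  · simpa using congr($hdiag v v)
  · simpa [SimpleGraph.adjMatrix_apply, hvw] using congr($hedge v w)

theorem isEdgeConstant_aeval {S : Type*} [CommSemiring S] [Algebra S R]
    (hG : IsOneWalkRegular R G) (p : S[X]) : IsEdgeConstant G (aeval (G.adjMatrix R) p) := by
  induction p using Polynomial.induction_on' with
  | add p q hp hq => exact map_add (aeval (G.adjMatrix R)) p q ▸ hp.add hq
  | monomial k c =>
    rw [aeval_monomial, ← Algebra.smul_def]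
    exact (hG.isEdgeConstant_pow k).smul c

theorem isRegularOfDegree [CharZero R] (hG : IsOneWalkRegular R G) (v : V) :
    G.IsRegularOfDegree (G.degree v) := by
  obtain ⟨a, -, hdiag, -⟩ := hG.isEdgeConstant_pow 2
  have hdeg : ∀ w, (G.degree w : R) = a := fun w => by
    rw [← hdiag w, pow_two, G.adjMatrix_mul_self_apply_self]
  exact fun w => Nat.cast_injective ((hdeg w).trans (hdeg v).symm)

end IsOneWalkRegular

end WalkRegular

/-- If G is 1-walk regular on n vertices, then ϑ(G)·ϑ(Ḡ) = n. -/
theorem lovaszTheta_mul_compl_eq {n : ℕ}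
    (G : SimpleGraph (Fin n)) [DecidableRel G.Adj]
    (hwalk : ∀ k : ℕ, 0 < k → ∃ a b : ℂ,
      Matrix.hadamard ((G.adjMatrix ℂ) ^ k) 1 = a • (1 : Matrix (Fin n) (Fin n) ℂ) ∧
      Matrix.hadamard ((G.adjMatrix ℂ) ^ k) (G.adjMatrix ℂ) = b • G.adjMatrix ℂ) :
    lovaszTheta G * lovaszTheta Gᶜ = (n : ℝ) := by
  have hG : IsOneWalkRegular ℂ G := hwalk
  obtain rfl | hn := eq_or_ne n 0
  · simp [lovaszTheta_of_isEmpty]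
  have : NeZero n := ⟨hn⟩
  obtain rfl | hbot := eq_or_ne G ⊥
  · exact lovaszTheta_mul_compl_of_isThetaDual (isThetaDual_card ⊥)
      (compl_bot (α := SimpleGraph (Fin n)) ▸ isThetaDual_top_allOnes) (by simp)
  have hreg := hG.isRegularOfDegree 0
  have hA : (G.adjMatrix ℂ).IsHermitian := isHermitian_adjMatrix
  obtain ⟨τ, hτ, hpsd⟩ := exists_mem_spectrum_posSemidef_sub hA
  have hτneg : τ < 0 := neg_of_posSemidef_adjMatrix_sub hbot hpsd
  obtain ⟨p, hE, hE0, hAE⟩ := exists_aeval_posSemidef_mul_eq_smul hA hτ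
  obtain ⟨N, hN⟩ := exists_isThetaDual_compl hreg hτneg hE hE0 hAE (hG.isEdgeConstant_aeval p)
  refine lovaszTheta_mul_compl_of_isThetaDual (isThetaDual_adjMatrix_sub hreg hτneg hpsd) hN ?_
  rw [div_mul_cancel₀ _ (zero_lt_one.trans_le hN.one_le).ne', Fintype.card_fin]
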